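/- (Energy stability for nonlocally harmonic functions.) Let $d \ge 1$, let $\Omega \subset \mathbb{R}^d$ be bounded and open, and let $\delta > 0$. Set $\Omega_\delta^c = \{y \in \mathbb{R}^d \setminus \Omega : \operatorname{dist}(y, \partial\Omega) < \delta\}$ and $\widehat\Omega_\delta = \Omega \cup \Omega_\delta^c$ (with the conventions $\operatorname{dist}(y,\emptyset)=\infty$, and that the suprema below over an empty set are $0$; these are relevant only if $\Omega=\emptyset$). Let $\gamma : \widehat\Omega_\delta \times \widehat\Omega_\delta \to [0,\infty)$ be measurable and symmetric ($\gamma(x,y) = \gamma(y,x)$) with $G := \sup_{x\in\widehat\Omega_\delta} \int_{\widehat\Omega_\delta} \gamma(x,y)\,dy < \infty$. Let $w : \widehat\Omega_\delta \to \mathbb{R}$ be bounded and measurable with $\int_{\widehat\Omega_\delta} (w(y) - w(x))\,\gamma(x,y)\,dy = 0$ for every $x \in \Omega$. Then the function $(x,y)\mapsto (w(y)-w(x))^2\gamma(x,y)$ is integrable on $\widehat\Omega_\delta\times\widehat\Omega_\delta$ and $$\int_{\widehat\Omega_\delta}\int_{\widehat\Omega_\delta} (w(y) - w(x))^2\, \gamma(x,y)\,dy\,dx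 \;\le\; 2\, |\Omega_\delta^c| \cdot \Big(\sup_{x\in\Omega_\delta^c} |w(x)|\Big) \cdot \Big(\sup_{x\in\widehat\Omega_\delta} |w(x)| + \sup_{x\in\Omega_\delta^c} |w(x)|\Big) \cdot G,$$ where $|\Omega_\delta^c|$ is the Lebesgue measure of $\Omega_\delta^c$. -/

import Mathlib

open MeasureTheory

/-- The interaction domain `Ω_δ^c`: the points outside `Ω` whose distance to `∂Ω` is less than `δ`.
The distance is the extended one, so that the distance to an empty set is `∞`. -/
def omegaC {d : ℕ} (Ω : Set (EuclideanSpace ℝ (Fin d))) (δ : ℝ) :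
    Set (EuclideanSpace ℝ (Fin d)) :=
  {y | y ∉ Ω ∧ Metric.infEDist y (frontier Ω) < ENNReal.ofReal δ}

/-- `Ω̂_δ = Ω ∪ Ω_δ^c`. -/
def omegaHat {d : ℕ} (Ω : Set (EuclideanSpace ℝ (Fin d))) (δ : ℝ) :
    Set (EuclideanSpace ℝ (Fin d)) :=
  Ω ∪ omegaC Ω δ

/-- `G(γ) = sup_{x ∈ Ω̂_δ} ∫_{Ω̂_δ} γ(x,y) dy`, as an extended nonnegative number
(`γ` is nonnegative on `Ω̂_δ × Ω̂_δ` wherever this is used). -/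
noncomputable def kernelMass {d : ℕ} (Ω : Set (EuclideanSpace ℝ (Fin d))) (δ : ℝ)
    (γ : EuclideanSpace ℝ (Fin d) → EuclideanSpace ℝ (Fin d) → ℝ) : ENNReal :=
  ⨆ x ∈ omegaHat Ω δ, ∫⁻ y in omegaHat Ω δ, ENNReal.ofReal (γ x y)

/-- Nonlocal Green identity: for a symmetric integrable kernel `γ` and a bounded function `w`, the
energy of `w` equals `-2` times the pairing of `w` with the nonlocal Laplacian of `w`. -/
theorem integrable_energy_and_integral_eq {X : Type*} [MeasurableSpace X] {μ : Measure X}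
    [SFinite μ] {γ : X → X → ℝ} {w : X → ℝ} {M : ℝ}
    (hγ : Integrable (Function.uncurry γ) (μ.prod μ))
    (hsym : ∀ᵐ p ∂μ.prod μ, γ p.1 p.2 = γ p.2 p.1)
    (hw : AEMeasurable w μ) (hM : ∀ᵐ x ∂μ, |w x| ≤ M) :
    Integrable (fun p : X × X => (w p.2 - w p.1) ^ 2 * γ p.1 p.2) (μ.prod μ) ∧
    ∫ x, ∫ y, (w y - w x) ^ 2 * γ x y ∂μ ∂μ =
      -2 * ∫ x, w x * ∫ y, (w y - w x) * γ x y ∂μ ∂μ := by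
  set f : X × X → ℝ := fun p => w p.1 * (w p.2 - w p.1) * γ p.1 p.2 with hf
  have hw1 : AEMeasurable (fun p : X × X => w p.1) (μ.prod μ) := hw.comp_fst
  have hw2 : AEMeasurable (fun p : X × X => w p.2) (μ.prod μ) := hw.comp_snd
  have hM1 : ∀ᵐ p ∂μ.prod μ, |w p.1| ≤ M := Measure.quasiMeasurePreserving_fst.ae hM
  have hM2 : ∀ᵐ p ∂μ.prod μ, |w p.2| ≤ M := Measure.quasiMeasurePreserving_snd.ae hM
  have hfi : Integrable f (μ.prod μ) := by
    refine Integrable.bdd_mul (c := M * (M + M)) hγ (hw1.mul (hw2.sub hw1)).aestronglyMeasurable ?_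
    filter_upwards [hM1, hM2] with p h1 h2
    have h3 : |w p.2 - w p.1| ≤ M + M := (abs_sub _ _).trans (add_le_add h2 h1)
    have : 0 ≤ M := (abs_nonneg _).trans h1
    simp only [Real.norm_eq_abs, abs_mul]
    gcongr
  have hswap : Integrable (fun p : X × X => f p.swap) (μ.prod μ) := hfi.swap
  have hE : (fun p : X × X => (w p.2 - w p.1) ^ 2 * γ p.1 p.2) =ᵐ[μ.prod μ]
      fun p => -(f p + f p.swap) := by
    filter_upwards [hsym] with p hp
    simp only [hf, Prod.fst_swap, Prod.snd_swap, ← hp]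
    ring
  have hEi := (hfi.add hswap).neg.congr hE.symm
  refine ⟨hEi, ?_⟩
  rw [integral_integral (f := fun x y => (w y - w x) ^ 2 * γ x y) hEi, integral_congr_ae hE,
    integral_neg, integral_add hfi hswap, integral_prod_swap f, integral_prod f hfi]
  simp only [hf, mul_assoc, integral_const_mul]
  ring

theorem isBounded_omegaHat {d : ℕ} {Ω : Set (EuclideanSpace ℝ (Fin d))}
    (hΩ : Bornology.IsBounded Ω) (δ : ℝ) : Bornology.IsBounded (omegaHat Ω δ) :=
  hΩ.union (((hΩ.closure.subset frontier_subset_closure).thickening (δ := δ)).subset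
    fun _ hy => hy.2)

theorem measurableSet_omegaC {d : ℕ} {Ω : Set (EuclideanSpace ℝ (Fin d))}
    (hΩ : IsOpen Ω) (δ : ℝ) : MeasurableSet (omegaC Ω δ) :=
  hΩ.measurableSet.compl.inter (Metric.isOpen_thickening (δ := δ) (E := frontier Ω)).measurableSet

theorem lintegral_le_kernelMass {d : ℕ} {Ω : Set (EuclideanSpace ℝ (Fin d))} {δ : ℝ}
    (γ : EuclideanSpace ℝ (Fin d) → EuclideanSpace ℝ (Fin d) → ℝ)
    {x : EuclideanSpace ℝ (Fin d)} (hx : x ∈ omegaHat Ω δ) :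
    ∫⁻ y in omegaHat Ω δ, ENNReal.ofReal (γ x y) ≤ kernelMass Ω δ γ :=
  le_iSup₂ (f := fun x _ => ∫⁻ y in omegaHat Ω δ, ENNReal.ofReal (γ x y)) x hx

/-- A kernel of finite mass is integrable on `Ω̂_δ × Ω̂_δ`. -/
theorem integrable_of_kernelMass_lt_top {d : ℕ} {Ω : Set (EuclideanSpace ℝ (Fin d))} {δ : ℝ}
    {γ : EuclideanSpace ℝ (Fin d) → EuclideanSpace ℝ (Fin d) → ℝ}
    (hH : MeasurableSet (omegaHat Ω δ)) (hHfin : volume (omegaHat Ω δ) < ⊤)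
    (hγm : AEMeasurable (Function.uncurry γ)
      ((volume.restrict (omegaHat Ω δ)).prod (volume.restrict (omegaHat Ω δ))))
    (hγ0 : ∀ x ∈ omegaHat Ω δ, ∀ y ∈ omegaHat Ω δ, 0 ≤ γ x y) (hG : kernelMass Ω δ γ < ⊤) :
    Integrable (Function.uncurry γ)
      ((volume.restrict (omegaHat Ω δ)).prod (volume.restrict (omegaHat Ω δ))) := by
  refine ⟨hγm.aestronglyMeasurable, ?_⟩
  rw [hasFiniteIntegral_iff_ofReal]
  · rw [lintegral_prod _ hγm.ennreal_ofReal]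
    calc ∫⁻ x in omegaHat Ω δ, ∫⁻ y in omegaHat Ω δ, ENNReal.ofReal (γ x y)
        ≤ ∫⁻ _ in omegaHat Ω δ, kernelMass Ω δ γ :=
          setLIntegral_mono' hH fun x hx => lintegral_le_kernelMass γ hx
      _ < ⊤ := by
          rw [setLIntegral_const]
          exact ENNReal.mul_lt_top hG hHfin
  · rw [Measure.prod_restrict]
    filter_upwards [ae_restrict_mem (hH.prod hH)] with p hp using hγ0 _ hp.1 _ hp.2

/-- The nonlocal Laplacian of a bounded function is bounded by the oscillation times the kernel
mass. -/
theorem abs_setIntegral_sub_mul_le {d : ℕ} {Ω : Set (EuclideanSpace ℝ (Fin d))} {δ : ℝ}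
    {γ : EuclideanSpace ℝ (Fin d) → EuclideanSpace ℝ (Fin d) → ℝ}
    {w : EuclideanSpace ℝ (Fin d) → ℝ} {x : EuclideanSpace ℝ (Fin d)} {B : ℝ}
    (hH : MeasurableSet (omegaHat Ω δ)) (hx : x ∈ omegaHat Ω δ)
    (hγ0 : ∀ y ∈ omegaHat Ω δ, 0 ≤ γ x y) (hG : kernelMass Ω δ γ < ⊤)
    (hB0 : 0 ≤ B) (hB : ∀ y ∈ omegaHat Ω δ, |w y - w x| ≤ B) :
    |∫ y in omegaHat Ω δ, (w y - w x) * γ x y| ≤ B * (kernelMass Ω δ γ).toReal := by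
  rw [← Real.norm_eq_abs]
  refine (norm_integral_le_lintegral_norm _).trans ?_
  rw [← ENNReal.toReal_ofReal hB0, ← ENNReal.toReal_mul]
  refine ENNReal.toReal_mono (ENNReal.mul_lt_top ENNReal.ofReal_lt_top hG).ne ?_
  calc ∫⁻ y in omegaHat Ω δ, ENNReal.ofReal ‖(w y - w x) * γ x y‖
      ≤ ∫⁻ y in omegaHat Ω δ, ENNReal.ofReal B * ENNReal.ofReal (γ x y) := by
        refine setLIntegral_mono' hH fun y hy => ?_
        rw [← ENNReal.ofReal_mul hB0, norm_mul, Real.norm_eq_abs, Real.norm_eq_abs,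
          abs_of_nonneg (hγ0 y hy)]
        exact ENNReal.ofReal_le_ofReal (mul_le_mul_of_nonneg_right (hB y hy) (hγ0 y hy))
    _ = ENNReal.ofReal B * ∫⁻ y in omegaHat Ω δ, ENNReal.ofReal (γ x y) :=
        lintegral_const_mul' _ _ ENNReal.ofReal_ne_top
    _ ≤ ENNReal.ofReal B * kernelMass Ω δ γ := by
        gcongr
        exact lintegral_le_kernelMass γ hx

/-- Energy stability for nonlocally harmonic functions. Only the values of `γ` on `Ω̂_δ × Ω̂_δ` and
of `w` on `Ω̂_δ` matter; `AEMeasurable` with respect to the restricted Lebesgue measure is Lebesgue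
measurability there. The first part of the conclusion says that the energy integral is finite. -/
theorem stmt9 (d : ℕ) (hd : 1 ≤ d) (Ω : Set (EuclideanSpace ℝ (Fin d)))
    (hΩb : Bornology.IsBounded Ω) (hΩo : IsOpen Ω) (δ : ℝ) (hδ : 0 < δ)
    (γ : EuclideanSpace ℝ (Fin d) → EuclideanSpace ℝ (Fin d) → ℝ)
    (hγm : AEMeasurable (Function.uncurry γ)
      (volume.restrict (omegaHat Ω δ ×ˢ omegaHat Ω δ)))
    (hγ0 : ∀ x ∈ omegaHat Ω δ, ∀ y ∈ omegaHat Ω δ, 0 ≤ γ x y)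
    (hγsym : ∀ x ∈ omegaHat Ω δ, ∀ y ∈ omegaHat Ω δ, γ x y = γ y x)
    (hG : kernelMass Ω δ γ < ⊤)
    (w : EuclideanSpace ℝ (Fin d) → ℝ)
    (hwm : AEMeasurable w (volume.restrict (omegaHat Ω δ)))
    (hwb : ∃ M : ℝ, ∀ x ∈ omegaHat Ω δ, |w x| ≤ M)
    (hharm : ∀ x ∈ Ω, ∫ y in omegaHat Ω δ, (w y - w x) * γ x y = 0) :
    IntegrableOn (fun p : EuclideanSpace ℝ (Fin d) × EuclideanSpace ℝ (Fin d) =>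
        (w p.2 - w p.1) ^ 2 * γ p.1 p.2) (omegaHat Ω δ ×ˢ omegaHat Ω δ) ∧
    ∫ x in omegaHat Ω δ, ∫ y in omegaHat Ω δ, (w y - w x) ^ 2 * γ x y ≤
      2 * (volume (omegaC Ω δ)).toReal *
        (⨆ x : omegaC Ω δ, |w x|) *
        ((⨆ x : omegaHat Ω δ, |w x|) + ⨆ x : omegaC Ω δ, |w x|) *
        (kernelMass Ω δ γ).toReal := by
  obtain ⟨M, hM⟩ := hwb
  have hC := measurableSet_omegaC hΩo δ
  have hH : MeasurableSet (omegaHat Ω δ) := hΩo.measurableSet.union hC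
  have hCH : omegaC Ω δ ⊆ omegaHat Ω δ := Set.subset_union_right
  have hHfin : volume (omegaHat Ω δ) < ⊤ := (isBounded_omegaHat hΩb δ).measure_lt_top
  have hCfin : volume (omegaC Ω δ) < ⊤ := (measure_mono hCH).trans_lt hHfin
  rw [Measure.volume_eq_prod, ← Measure.prod_restrict] at hγm
  have hsym : ∀ᵐ p ∂(volume.restrict (omegaHat Ω δ)).prod (volume.restrict (omegaHat Ω δ)),
      γ p.1 p.2 = γ p.2 p.1 := by
    rw [Measure.prod_restrict]
    filter_upwards [ae_restrict_mem (hH.prod hH)] with p hp using hγsym _ hp.1 _ hp.2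
  obtain ⟨hint, heq⟩ := integrable_energy_and_integral_eq
    (integrable_of_kernelMass_lt_top hH hHfin hγm hγ0 hG) hsym hwm
    ((ae_restrict_mem hH).mono hM)
  refine ⟨by rwa [IntegrableOn, Measure.volume_eq_prod, ← Measure.prod_restrict], ?_⟩
  set S := ⨆ x : omegaHat Ω δ, |w x|
  set T := ⨆ x : omegaC Ω δ, |w x|
  have hS0 : 0 ≤ S := Real.iSup_nonneg fun _ => abs_nonneg _
  have hT0 : 0 ≤ T := Real.iSup_nonneg fun _ => abs_nonneg _
  have hS : ∀ x ∈ omegaHat Ω δ, |w x| ≤ S := fun x hx =>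
    le_ciSup (f := fun x : omegaHat Ω δ => |w x|)
      ⟨M, Set.forall_mem_range.2 fun y => hM y y.2⟩ ⟨x, hx⟩
  have hT : ∀ x ∈ omegaC Ω δ, |w x| ≤ T := fun x hx =>
    le_ciSup (f := fun x : omegaC Ω δ => |w x|)
      ⟨M, Set.forall_mem_range.2 fun y => hM y (hCH y.2)⟩ ⟨x, hx⟩
  have hzero : ∀ x ∈ omegaHat Ω δ \ omegaC Ω δ,
      w x * ∫ y in omegaHat Ω δ, (w y - w x) * γ x y = 0 := fun x hx => by
    rw [hharm x (hx.1.resolve_right hx.2), mul_zero]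
  rw [heq, setIntegral_eq_of_subset_of_forall_sdiff_eq_zero hH hCH hzero]
  have hbound := norm_setIntegral_le_of_norm_le_const (μ := volume)
    (f := fun x => w x * ∫ y in omegaHat Ω δ, (w y - w x) * γ x y)
    (C := T * ((S + T) * (kernelMass Ω δ γ).toReal)) hCfin fun x hx => by
      rw [norm_mul]
      refine mul_le_mul (hT x hx) ?_ (norm_nonneg _) hT0
      exact abs_setIntegral_sub_mul_le hH (hCH hx) (hγ0 x (hCH hx)) hG (add_nonneg hS0 hT0)
        fun y hy => (abs_sub _ _).trans (add_le_add (hS y hy) (hT x hx))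
  rw [Real.norm_eq_abs, Measure.real] at hbound
  linarith [neg_le_of_abs_le hbound]
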